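/- Let F : ℝ^(m+1) → ℝ be continuous, positive away from 0, and positively 1-homogeneous. Then the Cartan area integrand satisfies A^F(Z) = 1 / R[F^(-m)](Z) for all Z ∈ ℝ^(m+1) \ {0}, where R is the extended spherical Radon transform. -/

import Mathlib

open MeasureTheory Classical

/-- The Cartan area integrand associated to `F`, extended by `A^F(0) = 0`. -/
noncomputable def cartanAF (m : ℕ) (F : EuclideanSpace ℝ (Fin (m + 1)) → ℝ)
    (Z : EuclideanSpace ℝ (Fin (m + 1))) : ℝ :=
  if Z = 0 then 0 else
    ‖Z‖ * (μH[m] (Metric.closedBall (0 : EuclideanSpace ℝ (Fin m)) 1)).toReal /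
      (μH[m] {T | T ∈ (ℝ ∙ Z)ᗮ ∧ F T ≤ 1}).toReal

/-- The extended spherical Radon transform. -/
noncomputable def radonT (m : ℕ) (g : EuclideanSpace ℝ (Fin (m + 1)) → ℝ)
    (Z : EuclideanSpace ℝ (Fin (m + 1))) : ℝ :=
  (1 / (‖Z‖ * (μH[(m : ℝ) - 1]
      (Metric.sphere (0 : EuclideanSpace ℝ (Fin m)) 1)).toReal)) *
    ∫ ω in (Metric.sphere (0 : EuclideanSpace ℝ (Fin (m + 1))) 1 ∩
        ((ℝ ∙ Z)ᗮ : Submodule ℝ (EuclideanSpace ℝ (Fin (m + 1))))),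
      g ω ∂(μH[(m : ℝ) - 1])

open Metric Set Filter Topology Module Pointwise
open scoped ENNReal NNReal

section UniformlyDistributed

variable {X : Type*} [MetricSpace X] [SecondCountableTopology X] [HasBesicovitchCovering X]
  [MeasurableSpace X] [BorelSpace X]

/-- Two finite measures concentrated on a set `S`, for which balls of equal radii centred on `S`
have equal mass, are proportional. -/
theorem measure_univ_smul_eq_of_uniformlyDistributed {μ ν : Measure X} [IsFiniteMeasure μ]
    [IsFiniteMeasure ν] {S : Set X} (hμS : μ Sᶜ = 0) (hνS : ν Sᶜ = 0)
    (hμ : ∀ x ∈ S, ∀ y ∈ S, ∀ r, μ (closedBall x r) = μ (closedBall y r))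
    (hν : ∀ x ∈ S, ∀ y ∈ S, ∀ r, ν (closedBall x r) = ν (closedBall y r)) :
    μ univ • ν = ν univ • μ := by
  have key : ∀ ρ : Measure X, IsFiniteMeasure ρ → ρ ≪ μ + ν →
      (∀ x ∈ S, ∀ y ∈ S, ∀ r, ρ (closedBall x r) = ρ (closedBall y r)) →
      ∃ c : ℝ≥0∞, ρ = c • (μ + ν) := by
    intro ρ hfin hac hρ
    have hS : ∀ᵐ x ∂(μ + ν), x ∈ S := by
      rw [ae_iff]
      change (μ + ν) Sᶜ = 0
      simp [hμS, hνS]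
    have hlim := (Besicovitch.ae_tendsto_rnDeriv ρ (μ + ν)).and hS
    rcases eq_or_ne (μ + ν) 0 with h0 | h0
    · refine ⟨0, ?_⟩
      rw [h0] at hac
      simpa using Measure.absolutelyContinuous_zero_iff.1 hac
    · have : (ae (μ + ν)).NeBot := ae_neBot.2 h0
      obtain ⟨x₀, hx₀, hx₀S⟩ := hlim.exists
      refine ⟨ρ.rnDeriv (μ + ν) x₀, ?_⟩
      have hconst : ρ.rnDeriv (μ + ν) =ᵐ[μ + ν] fun _ => ρ.rnDeriv (μ + ν) x₀ := by
        filter_upwards [hlim] with x hx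
        refine tendsto_nhds_unique hx.1 (hx₀.congr fun r => ?_)
        rw [hρ x₀ hx₀S x hx.2, Measure.add_apply, Measure.add_apply, hμ x₀ hx₀S x hx.2,
          hν x₀ hx₀S x hx.2]
      rw [← withDensity_const, ← withDensity_congr_ae hconst,
        Measure.withDensity_rnDeriv_eq _ _ hac]
  obtain ⟨a, ha⟩ := key μ inferInstance (Measure.le_add_right le_rfl).absolutelyContinuous hμ
  obtain ⟨b, hb⟩ := key ν inferInstance (Measure.le_add_left le_rfl).absolutelyContinuous hν
  generalize μ + ν = τ at ha hb
  rw [ha, hb]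
  simp only [smul_smul, Measure.smul_apply, smul_eq_mul]
  congr 1
  ring

end UniformlyDistributed

section Sphere

variable {E : Type*} [NormedAddCommGroup E] [InnerProductSpace ℝ E]

theorem exists_linearIsometryEquiv_apply_eq {x y : E} (h : ‖x‖ = ‖y‖) :
    ∃ e : E ≃ₗᵢ[ℝ] E, e x = y :=
  ⟨(ℝ ∙ (x - y))ᗮ.reflection, Submodule.reflection_sub h⟩

theorem LinearIsometryEquiv.image_sphere_zero (e : E ≃ₗᵢ[ℝ] E) (r : ℝ) :
    e '' sphere 0 r = sphere 0 r := by
  simp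

theorem image_Ioo_smul_closedBall_inter_sphere (e : E ≃ₗᵢ[ℝ] E) (x : E) (r : ℝ) :
    e '' (Ioo (0 : ℝ) 1 • (closedBall x r ∩ sphere 0 1)) =
      Ioo (0 : ℝ) 1 • (closedBall (e x) r ∩ sphere 0 1) := by
  rw [← image2_smul, image_image2_distrib_right (g := (e : E → E)) (f' := (· • ·))
    (fun a b => map_smul e a b), image_inter e.injective, e.image_sphere_zero, e.image_closedBall,
    image2_smul]

theorem map_toSphere_apply [MeasurableSpace E] [BorelSpace E] (μ : Measure E)
    {A : Set E} (hA : MeasurableSet A) :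
    μ.toSphere.map Subtype.val A = finrank ℝ E * μ (Ioo (0 : ℝ) 1 • (A ∩ sphere 0 1)) := by
  rw [Measure.map_apply measurable_subtype_coe hA,
    μ.toSphere_apply' (measurable_subtype_coe hA), Subtype.image_preimage_coe, inter_comm]

variable [FiniteDimensional ℝ E] [MeasurableSpace E] [BorelSpace E]

theorem hausdorffMeasure_sphere_ne_zero {n : ℕ} (hn : finrank ℝ E = n + 1) :
    μH[n] (sphere (0 : E) 1) ≠ 0 := by
  have : Fact (finrank ℝ E = n + 1) := ⟨hn⟩
  have : Nontrivial E := Module.nontrivial_of_finrank_pos (R := ℝ) (by omega)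
  obtain ⟨v, hv⟩ := exists_norm_eq E zero_le_one
  have hv0 : v ≠ 0 := by rintro rfl; simp at hv
  have hr : finrank ℝ (ℝ ∙ v)ᗮ = n := Submodule.finrank_orthogonal_span_singleton hv0
  have hsub : ball (0 : (ℝ ∙ v)ᗮ) 1 ⊆
      (ℝ ∙ v)ᗮ.orthogonalProjectionOnto '' sphere (0 : E) 1 := by
    intro w hw
    rw [mem_ball_zero_iff] at hw
    have hwv : inner ℝ (w : E) v = 0 :=
      Submodule.mem_orthogonal_singleton_iff_inner_left.1 w.2
    refine ⟨w + √(1 - ‖w‖ ^ 2) • v, ?_, ?_⟩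
    · have h1 : 0 ≤ 1 - ‖w‖ ^ 2 := by nlinarith [norm_nonneg w]
      rw [mem_sphere_zero_iff_norm, ← sq_eq_sq₀ (norm_nonneg _) zero_le_one,
        norm_add_sq_real, inner_smul_right, hwv, norm_smul, hv, mul_one, Real.norm_eq_abs, sq_abs,
        Real.sq_sqrt h1, Submodule.coe_norm]
      ring
    · rw [map_add, map_smul, Submodule.orthogonalProjectionOnto_mem_subspace_eq_self,
        Submodule.orthogonalProjectionOnto_orthogonalComplement_singleton_eq_zero]
      simp
  have hlip : LipschitzWith 1 (ℝ ∙ v)ᗮ.orthogonalProjectionOnto :=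
    Submodule.lipschitzWith_orthogonalProjectionOnto _
  have hle := (measure_mono hsub).trans
    (hlip.hausdorffMeasure_image_le n.cast_nonneg (sphere (0 : E) 1))
  intro h0
  rw [h0, mul_zero, nonpos_iff_eq_zero, ← hr] at hle
  exact (measure_ball_pos (μH[finrank ℝ (ℝ ∙ v)ᗮ] : Measure (ℝ ∙ v)ᗮ) 0 one_pos).ne' hle

theorem hausdorffMeasure_sphere_lt_top {n : ℕ} (hn : finrank ℝ E = n + 1) :
    μH[n] (sphere (0 : E) 1) < ∞ := by
  have : Fact (finrank ℝ E = n + 1) := ⟨hn⟩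
  refine (isCompact_sphere (0 : E) 1).measure_lt_top_of_nhdsWithin fun x hx => ?_
  let p : sphere (0 : E) 1 := ⟨x, hx⟩
  have hp : ‖((-p : sphere (0 : E) 1) : E)‖ = 1 := norm_eq_of_mem_sphere _
  let φ := stereographic hp
  have hsrc : p ∈ φ.source := by
    rw [stereographic_source, mem_compl_singleton_iff]
    exact fun h => ne_neg_of_mem_unit_sphere ℝ p (h.trans (Subtype.ext rfl))
  have hr : finrank ℝ (ℝ ∙ ((-p : sphere (0 : E) 1) : E))ᗮ = n :=
    Submodule.finrank_orthogonal_span_singleton (ne_zero_of_mem_unit_sphere _)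
  have hsm : ContDiff ℝ 1 (fun w => (φ.symm w : E)) :=
    contDiff_stereoInvFunAux.comp
      (f := Subtype.val) (Submodule.subtypeL (ℝ ∙ ((-p : sphere (0 : E) 1) : E))ᗮ).contDiff
  obtain ⟨K, hK⟩ := (hsm.locallyLipschitz.locallyLipschitzOn
    (s := closedBall 0 1)).exists_lipschitzOnWith_of_compact (isCompact_closedBall _ 1)
  refine ⟨(fun w => (φ.symm w : E)) '' closedBall 0 1, ?_, ?_⟩
  · rw [← map_nhds_subtype_val p, mem_map]
    have h1 := (φ.continuousAt hsrc).preimage_mem_nhds (closedBall_mem_nhds (φ p) one_pos)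
    filter_upwards [h1, φ.open_source.mem_nhds hsrc] with q hq hqs
    refine ⟨φ q, ?_, congrArg Subtype.val (φ.left_inv hqs)⟩
    rwa [mem_preimage, show φ p = 0 from stereographic_neg_apply p] at hq
  · refine (hK.hausdorffMeasure_image_le n.cast_nonneg).trans_lt
      (ENNReal.mul_lt_top (by simp) ?_)
    have := (isCompact_closedBall (0 : (ℝ ∙ ((-p : sphere (0 : E) 1) : E))ᗮ) 1).measure_lt_top
      (μ := μH[finrank ℝ (ℝ ∙ ((-p : sphere (0 : E) 1) : E))ᗮ])
    rwa [hr] at this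

/-- On the unit sphere, Hausdorff measure of codimension one is proportional to the polar
surface measure. -/
theorem hausdorffMeasure_sphere_smul_toSphere {n : ℕ} (hn : finrank ℝ E = n + 1) :
    μH[n] (sphere (0 : E) 1) •
        (μH[finrank ℝ E] : Measure E).toSphere.map Subtype.val =
      (finrank ℝ E * μH[finrank ℝ E] (closedBall (0 : E) 1)) •
        (μH[n] : Measure E).restrict (sphere 0 1) := by
  have : Nontrivial E := Module.nontrivial_of_finrank_pos (R := ℝ) (by omega)
  have : IsFiniteMeasure ((μH[n] : Measure E).restrict (sphere 0 1)) :=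
    ⟨by simpa using hausdorffMeasure_sphere_lt_top hn⟩
  have hinv : ∀ x ∈ sphere (0 : E) 1, ∀ y ∈ sphere (0 : E) 1, ∃ e : E ≃ₗᵢ[ℝ] E, e x = y :=
    fun x hx y hy => exists_linearIsometryEquiv_apply_eq <| by
      rw [mem_sphere_zero_iff_norm] at hx hy; rw [hx, hy]
  have h := measure_univ_smul_eq_of_uniformlyDistributed
    (μ := (μH[n] : Measure E).restrict (sphere 0 1))
    (ν := (μH[finrank ℝ E] : Measure E).toSphere.map Subtype.val) (S := sphere (0 : E) 1)
    ?_ ?_ ?_ ?_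
  · rwa [Measure.restrict_apply_univ, Measure.map_apply measurable_subtype_coe .univ,
      preimage_univ, Measure.toSphere_apply_univ,
      ← Measure.addHaar_closedBall_eq_addHaar_ball] at h
  · simp [Measure.restrict_apply isClosed_sphere.measurableSet.compl]
  · simp [map_toSphere_apply _ isClosed_sphere.measurableSet.compl]
  · intro x hx y hy r
    obtain ⟨e, rfl⟩ := hinv x hx y hy
    rw [Measure.restrict_apply isClosed_closedBall.measurableSet,
      Measure.restrict_apply isClosed_closedBall.measurableSet, ← e.image_closedBall]
    nth_rw 2 [← e.image_sphere_zero]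
    rw [← image_inter e.injective]
    exact (e.toIsometryEquiv.hausdorffMeasure_image _ _).symm
  · intro x hx y hy r
    obtain ⟨e, rfl⟩ := hinv x hx y hy
    rw [map_toSphere_apply _ isClosed_closedBall.measurableSet,
      map_toSphere_apply _ isClosed_closedBall.measurableSet,
      ← image_Ioo_smul_closedBall_inter_sphere]
    congr 1
    exact (e.toIsometryEquiv.hausdorffMeasure_image _ _).symm

/-- Volume of the unit sublevel set of a gauge, in polar coordinates. -/
theorem lintegral_toSphere_inv_pow {n : ℕ} (hn : finrank ℝ E = n + 1) (μ : Measure E)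
    [μ.IsAddHaarMeasure] {G : E → ℝ} (hG : Continuous G) (hpos : ∀ y, y ≠ 0 → 0 < G y)
    (hhom : ∀ t : ℝ, 0 < t → ∀ y, G (t • y) = t * G y) :
    ∫⁻ ω : sphere (0 : E) 1, ENNReal.ofReal ((G ω ^ (n + 1))⁻¹) ∂μ.toSphere =
      (n + 1 : ℕ) * μ {x | G x ≤ 1} := by
  have : Nontrivial E := Module.nontrivial_of_finrank_pos (R := ℝ) (by omega)
  have hK : MeasurableSet {x | G x ≤ 1} := (isClosed_le hG continuous_const).measurableSet
  have hmp := μ.measurePreserving_homeomorphUnitSphereProd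
  have hsymm := hmp.symm (homeomorphUnitSphereProd E).toMeasurableEquiv
  have h1 : μ {x | G x ≤ 1} =
      μ.comap ((↑) : ({0}ᶜ : Set E) → E) (Subtype.val ⁻¹' {x | G x ≤ 1}) := by
    rw [comap_subtype_coe_apply (measurableSet_singleton _).compl, Subtype.image_preimage_coe,
      ← sdiff_eq_compl_inter, measure_sdiff_null (measure_singleton _)]
  have hnull : ∀ a : Ioi (0 : ℝ), Measure.volumeIoiPow n {a} = 0 := by
    intro a
    refine withDensity_absolutelyContinuous _ _ ?_
    rw [comap_subtype_coe_apply measurableSet_Ioi]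
    simp
  rw [h1, ← hsymm.measure_preimage (measurable_subtype_coe hK).nullMeasurableSet,
    Measure.prod_apply (hsymm.measurable (measurable_subtype_coe hK)),
    ← lintegral_const_mul' _ _ (by simp)]
  refine lintegral_congr fun ω => ?_
  have hω : 0 < G ω := hpos _ (ne_zero_of_mem_unit_sphere ω)
  have hset : (Prod.mk ω ⁻¹' ((homeomorphUnitSphereProd E).toMeasurableEquiv.symm ⁻¹'
      (Subtype.val ⁻¹' {x | G x ≤ 1}))) = Iic (⟨(G ω)⁻¹, inv_pos.2 hω⟩ : Ioi (0 : ℝ)) := by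
    ext r
    change G ((r : ℝ) • (ω : E)) ≤ 1 ↔ (r : ℝ) ≤ (G ω)⁻¹
    rw [hhom _ r.2, ← one_div, le_div_iff₀ hω]
  rw [hset, hn, Nat.add_sub_cancel, ← Iio_union_right,
    measure_congr (union_ae_eq_left_of_ae_eq_empty (ae_eq_empty.2 (hnull _))),
    Measure.volumeIoiPow_apply_Iio, ← ENNReal.ofReal_natCast, ← ENNReal.ofReal_mul (by positivity)]
  congr 1
  push_cast
  rw [inv_pow]
  field_simp

theorem measureReal_closedBall_mul_integral_sphere {n : ℕ} (hn : finrank ℝ E = n + 1)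
    {G : E → ℝ} (hG : Continuous G) (hpos : ∀ y, y ≠ 0 → 0 < G y)
    (hhom : ∀ t : ℝ, 0 < t → ∀ y, G (t • y) = t * G y) :
    (μH[finrank ℝ E] (closedBall (0 : E) 1)).toReal *
        ∫ ω in sphere (0 : E) 1, (G ω ^ (n + 1))⁻¹ ∂μH[n] =
      (μH[finrank ℝ E] {x | G x ≤ 1}).toReal * (μH[n] (sphere (0 : E) 1)).toReal := by
  have hG0 : ∀ x, 0 ≤ G x := fun x => by
    rcases eq_or_ne x 0 with rfl | hx
    · have := hhom 2 two_pos 0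
      rw [smul_zero] at this
      linarith
    · exact (hpos x hx).le
  have hpol : ∫ ω : sphere (0 : E) 1, (G ω ^ (n + 1))⁻¹ ∂(μH[finrank ℝ E] : Measure E).toSphere =
      (n + 1 : ℕ) * (μH[finrank ℝ E] {x | G x ≤ 1}).toReal := by
    rw [integral_eq_lintegral_of_nonneg_ae
      (.of_forall fun ω => inv_nonneg.2 (pow_nonneg (hG0 _) _))
      (by fun_prop), lintegral_toSphere_inv_pow hn _ hG hpos hhom,
      ENNReal.toReal_mul, ENNReal.toReal_natCast]
  have h := congrArg (fun ν : Measure E => ∫ ω, (G ω ^ (n + 1))⁻¹ ∂ν)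
    (hausdorffMeasure_sphere_smul_toSphere hn)
  simp only [integral_smul_measure] at h
  rw [(MeasurableEmbedding.subtype_coe isClosed_sphere.measurableSet).integral_map, hpol] at h
  simp only [ENNReal.toReal_mul, smul_eq_mul, ENNReal.toReal_natCast] at h
  have hn0 : ((n + 1 : ℕ) : ℝ) ≠ 0 := by positivity
  apply mul_left_cancel₀ hn0
  nth_rw 1 [← hn]
  linarith

end Sphere




/-- The Cartan area integrand is the reciprocal of the Radon transform of `F^(-m)`
(Corollary 3.8): `A^F(Z) = 1 / R[F^(-m)](Z)` for `Z ≠ 0`. -/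
theorem cartanAF_eq_inv_radon (m : ℕ) (hm : 1 ≤ m)
    (F : EuclideanSpace ℝ (Fin (m + 1)) → ℝ)
    (hF : Continuous F)
    (hpos : ∀ y : EuclideanSpace ℝ (Fin (m + 1)), y ≠ 0 → 0 < F y)
    (hhom : ∀ t : ℝ, 0 < t → ∀ y, F (t • y) = t * F y) :
    ∀ Z : EuclideanSpace ℝ (Fin (m + 1)), Z ≠ 0 →
      cartanAF m F Z = 1 / radonT m (fun y => ((F y) ^ m)⁻¹) Z := by
  intro Z hZ
  obtain ⟨n, rfl⟩ : ∃ n, m = n + 1 := ⟨m - 1, by omega⟩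
  have : Fact (finrank ℝ (EuclideanSpace ℝ (Fin (n + 1 + 1))) = n + 1 + 1) := ⟨by simp⟩
  let L : EuclideanSpace ℝ (Fin (n + 1)) →ₗᵢ[ℝ] EuclideanSpace ℝ (Fin (n + 1 + 1)) :=
    (ℝ ∙ Z)ᗮ.subtypeₗᵢ.comp
      (OrthonormalBasis.fromOrthogonalSpanSingleton (n + 1) hZ).repr.symm.toLinearIsometry
  have hL : range L = (ℝ ∙ Z)ᗮ := by
    simp [L, range_comp]
  have hrank : finrank ℝ (EuclideanSpace ℝ (Fin (n + 1))) = n + 1 := by simp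
  have hmain := measureReal_closedBall_mul_integral_sphere hrank (G := F ∘ L)
    (hF.comp L.continuous)
    (fun y hy => hpos _ fun h => hy (L.injective (h.trans (map_zero L).symm)))
    (fun t ht y => by simp [hhom t ht])
  have hK : μH[(n + 1 : ℕ)] {T | T ∈ (ℝ ∙ Z)ᗮ ∧ F T ≤ 1} =
      μH[(n + 1 : ℕ)] {x | (F ∘ L) x ≤ 1} := by
    rw [← L.isometry.hausdorffMeasure_image (Or.inl (Nat.cast_nonneg _))]
    congr 1
    ext T
    change T ∈ ((ℝ ∙ Z)ᗮ : Set _) ∧ F T ≤ 1 ↔ _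
    rw [← hL]
    constructor
    · rintro ⟨⟨x, rfl⟩, hx⟩
      exact ⟨x, hx, rfl⟩
    · rintro ⟨x, hx, rfl⟩
      exact ⟨⟨x, rfl⟩, hx⟩
  have hS : ∫ ω in (sphere (0 : EuclideanSpace ℝ (Fin (n + 1 + 1))) 1 ∩ (ℝ ∙ Z)ᗮ),
      (F ω ^ (n + 1))⁻¹ ∂μH[n] =
      ∫ ω in sphere (0 : EuclideanSpace ℝ (Fin (n + 1))) 1, ((F ∘ L) ω ^ (n + 1))⁻¹ ∂μH[n] := by
    rw [← hL, ← Measure.restrict_restrict isClosed_sphere.measurableSet,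
      ← L.isometry.map_hausdorffMeasure (Or.inl n.cast_nonneg),
      L.isometry.isClosedEmbedding.measurableEmbedding.setIntegral_map]
    congr 3
    ext x
    simp
  have hσ0 : (μH[n] (sphere (0 : EuclideanSpace ℝ (Fin (n + 1))) 1)).toReal ≠ 0 :=
    ENNReal.toReal_ne_zero.2
      ⟨hausdorffMeasure_sphere_ne_zero hrank, (hausdorffMeasure_sphere_lt_top hrank).ne⟩
  have hB0 : (μH[(n + 1 : ℕ)] (closedBall (0 : EuclideanSpace ℝ (Fin (n + 1))) 1)).toReal ≠ 0 := by
    rw [← hrank]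
    exact ENNReal.toReal_ne_zero.2 ⟨(measure_closedBall_pos _ _ one_pos).ne',
      (isCompact_closedBall _ _).measure_lt_top.ne⟩
  have hcast : ((n + 1 : ℕ) : ℝ) - 1 = n := by simp
  rw [hrank] at hmain
  rw [cartanAF, if_neg hZ, radonT, hcast, hS, hK]
  have hZ0 : ‖Z‖ ≠ 0 := norm_ne_zero_iff.2 hZ
  generalize (μH[(n + 1 : ℕ)] (closedBall (0 : EuclideanSpace ℝ (Fin (n + 1))) 1)).toReal = B at *
  generalize (μH[(n + 1 : ℕ)] {x | (F ∘ L) x ≤ 1}).toReal = K at *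
  generalize (μH[n] (sphere (0 : EuclideanSpace ℝ (Fin (n + 1))) 1)).toReal = σ at *
  generalize ∫ ω in sphere (0 : EuclideanSpace ℝ (Fin (n + 1))) 1, ((F ∘ L) ω ^ (n + 1))⁻¹ ∂μH[n]
    = I at *
  rcases eq_or_ne K 0 with rfl | hK0
  · have : I = 0 := by simpa [hB0] using hmain
    simp [this]
  · have hI0 : I ≠ 0 := by
      rintro rfl
      simp [hK0, hσ0] at hmain
    field_simp
    linarith
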